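/- For every n ≥ 1, the number of parity-reversing pairings on [2n] with exactly 3 crossings equals C(2n, n−3), with the convention that C(2n, n−ℓ) = 0 when ℓ > n; that is, r_{n,3} = C(2n, n−3). -/

import Mathlib

open scoped Classical

/-- Asymmetric crossing of two chords: `B = {a,b}` with `a < b` starts strictly
before `C = {c,d}` and they interleave: `a < c < b < d`. -/
def CrossAsym (B C : Finset ℕ) : Prop :=
  ∃ a b c d : ℕ, a < c ∧ c < b ∧ b < d ∧ B = {a, b} ∧ C = {c, d}

/-- Two blocks cross: `a < c < b < d` or `c < a < d < b`. -/
def Crosses (B C : Finset ℕ) : Prop := CrossAsym B C ∨ CrossAsym C B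

/-- A pairing on `[2n] = {1, …, 2n}`: a partition of `{1, …, 2n}` into blocks of size 2. -/
def IsPairing (n : ℕ) (π : Finset (Finset ℕ)) : Prop :=
  (∀ B ∈ π, B.card = 2 ∧ B ⊆ Finset.Icc 1 (2 * n)) ∧
  (∀ x ∈ Finset.Icc 1 (2 * n), ∃! B, B ∈ π ∧ x ∈ B)

/-- Number of crossings of a pairing: the number of unordered pairs of blocks that cross
(each crossing unordered pair `{B, C}` satisfies the asymmetric condition exactly once). -/
noncomputable def crNum (π : Finset (Finset ℕ)) : ℕ :=
  Set.ncard {p : Finset ℕ × Finset ℕ | p.1 ∈ π ∧ p.2 ∈ π ∧ CrossAsym p.1 p.2}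

/-- A pairing is parity-reversing if each block consists of one odd and one even number. -/
def ParityReversing (π : Finset (Finset ℕ)) : Prop :=
  ∀ B ∈ π, ∃ a b : ℕ, B = {a, b} ∧ Odd a ∧ Even b

/-- A pairing is connected if its blocks cannot be split into two nonempty families
with no crossing between the families. -/
def ConnectedPairing (π : Finset (Finset ℕ)) : Prop :=
  ¬ ∃ S T : Finset (Finset ℕ), S ∪ T = π ∧ Disjoint S T ∧ S.Nonempty ∧ T.Nonempty ∧
      ∀ B ∈ S, ∀ C ∈ T, ¬ Crosses B C

/-- `tCount n k`: the number of pairings on `[2n]` with exactly `k` crossings. -/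
noncomputable def tCount (n k : ℕ) : ℕ :=
  Set.ncard {π : Finset (Finset ℕ) | IsPairing n π ∧ crNum π = k}

/-- `rCount n k`: the number of parity-reversing pairings on `[2n]` with exactly `k` crossings. -/
noncomputable def rCount (n k : ℕ) : ℕ :=
  Set.ncard {π : Finset (Finset ℕ) | IsPairing n π ∧ ParityReversing π ∧ crNum π = k}

/-- `bCount n k`: the number of connected parity-reversing pairings on `[2n]`
with exactly `k` crossings. -/
noncomputable def bCount (n k : ℕ) : ℕ :=
  Set.ncard {π : Finset (Finset ℕ) |
    IsPairing n π ∧ ParityReversing π ∧ ConnectedPairing π ∧ crNum π = k}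

/-- `bTot n`: the number of connected parity-reversing pairings on `[2n]` (equals 1 for `n = 0`). -/
noncomputable def bTot (n : ℕ) : ℕ :=
  Set.ncard {π : Finset (Finset ℕ) |
    IsPairing n π ∧ ParityReversing π ∧ ConnectedPairing π}

/-- The Touchard alternating sum `∑_{k=-n}^n (-1)^k q^{k(k-1)/2} C(2n, n+k)`. -/
noncomputable def touchardSum (n : ℕ) (q : ℂ) : ℂ :=
  ∑ k ∈ Finset.Icc (-(n : ℤ)) (n : ℤ),
    (-1 : ℂ) ^ k * q ^ ((k * (k - 1)) / 2).toNat * ((2 * n).choose ((n : ℤ) + k).toNat : ℂ)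

/-- `T_n(q) = ∑_k t_{n,k} q^k` as a complex polynomial function
(all crossing numbers of pairings on `[2n]` satisfy `k ≤ n*n`). -/
noncomputable def Tpoly (n : ℕ) (q : ℂ) : ℂ :=
  ∑ k ∈ Finset.range (n * n + 1), (tCount n k : ℂ) * q ^ k

/-- `T_n(q) = ∑_k t_{n,k} q^k` as a real polynomial function. -/
noncomputable def TpolyR (n : ℕ) (q : ℝ) : ℝ :=
  ∑ k ∈ Finset.range (n * n + 1), (tCount n k : ℝ) * q ^ k

/-- `R_n(q) = ∑_k r_{n,k} q^k` as a real polynomial function. -/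
noncomputable def RpolyR (n : ℕ) (q : ℝ) : ℝ :=
  ∑ k ∈ Finset.range (n * n + 1), (rCount n k : ℝ) * q ^ k

/-- Non-crossing partitions of `{1, …, 2n}` all of whose blocks have even size. -/
noncomputable def NCEvenPartitions (n : ℕ) : Finset (Finset (Finset ℕ)) :=
  ((Finset.Icc 1 (2 * n)).powerset.powerset).filter (fun π =>
    (∀ B ∈ π, B.Nonempty ∧ Even B.card) ∧
    (∀ x ∈ Finset.Icc 1 (2 * n), ∃! B, B ∈ π ∧ x ∈ B) ∧
    ¬ ∃ a b c d : ℕ, a < b ∧ b < c ∧ c < d ∧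
        ∃ B ∈ π, ∃ C ∈ π, B ≠ C ∧ a ∈ B ∧ c ∈ B ∧ b ∈ C ∧ d ∈ C)

/-!
Scan the points downwards from `2n` to `1`, keeping the increasing list of open points, those still
waiting for a partner. A scanned point either becomes open or is matched with the `i`-th open point,
which creates `i` crossings, counting from `0`. As long as every match is with the first open point,
the open points alternate in parity. A non-alternating list cannot be completed without crossings,
while the noncrossing completions of an alternating list of length `h` are counted, by the
reflection principle, as differences of two numbers of walks, ending at `h` and at `h + 2`.

With three crossings available, an alternating list allows a match with its first entry, or with its
third entry at the cost of two crossings; the latter leaves the first two open points in the wrong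
order, and the one remaining crossing is forced to undo that swap. The resulting linear recursion is
solved in closed form by numbers of walks, and for the empty list it yields the number of walks of
length `2n` from `0` to `6`.
-/

open Finset

section Matching

variable {α : Type*} {U F V B C : Finset α} {π : Finset (Finset α)} {a x : α}

/-- `π` is a perfect matching of the finite set `U`, so that `IsPairing n` is
`IsMatchingOn (Finset.Icc 1 (2 * n))`. -/
def IsMatchingOn (U : Finset α) (π : Finset (Finset α)) : Prop :=
  (∀ B ∈ π, #B = 2 ∧ B ⊆ U) ∧ ∀ x ∈ U, ∃! B, B ∈ π ∧ x ∈ B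

theorem IsMatchingOn.eq_of_mem_of_mem (h : IsMatchingOn U π) (hB : B ∈ π) (hC : C ∈ π)
    (hxB : x ∈ B) (hxC : x ∈ C) : B = C :=
  (h.2 x ((h.1 B hB).2 hxB)).unique ⟨hB, hxB⟩ ⟨hC, hxC⟩

variable [DecidableEq α]

theorem IsMatchingOn.exists_pair_mem (h : IsMatchingOn U π) (hx : x ∈ U) :
    ∃ y ∈ U, {y, x} ∈ π := by
  obtain ⟨B, ⟨hB, hxB⟩, -⟩ := h.2 x hx
  obtain ⟨hcard, hBU⟩ := h.1 B hB
  obtain ⟨b, c, -, rfl⟩ := card_eq_two.1 hcard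
  simp only [insert_subset_iff, singleton_subset_iff] at hBU
  rcases mem_insert.1 hxB with rfl | hxc
  · exact ⟨c, hBU.2, pair_comm x c ▸ hB⟩
  · exact ⟨b, hBU.1, mem_singleton.1 hxc ▸ hB⟩

theorem isMatchingOn_insert_iff (hcard : #B = 2) (hBU : B ⊆ U) (hBπ : B ∉ π) :
    IsMatchingOn U (insert B π) ↔ IsMatchingOn (U \ B) π := by
  constructor
  · intro h
    refine ⟨fun C hC => ⟨(h.1 C (mem_insert_of_mem hC)).1, fun y hy => ?_⟩, fun y hy => ?_⟩
    · refine mem_sdiff.2 ⟨(h.1 C (mem_insert_of_mem hC)).2 hy, fun hyB => hBπ ?_⟩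
      rwa [h.eq_of_mem_of_mem (mem_insert_self B π) (mem_insert_of_mem hC) hyB hy]
    · obtain ⟨hyU, hyB⟩ := mem_sdiff.1 hy
      obtain ⟨C, ⟨hC, hyC⟩, huniq⟩ := h.2 y hyU
      have hCπ : C ∈ π := (mem_insert.1 hC).resolve_left fun hCB => hyB (hCB ▸ hyC)
      exact ⟨C, ⟨hCπ, hyC⟩, fun D hD => huniq D ⟨mem_insert_of_mem hD.1, hD.2⟩⟩
  · intro h
    have notMem_of_mem : ∀ C ∈ π, ∀ y ∈ C, y ∉ B := fun C hC y hy =>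
      (mem_sdiff.1 ((h.1 C hC).2 hy)).2
    refine ⟨forall_mem_insert .. |>.2 ⟨⟨hcard, hBU⟩, fun C hC => ?_⟩, fun y hyU => ?_⟩
    · exact ⟨(h.1 C hC).1, (h.1 C hC).2.trans sdiff_subset⟩
    · by_cases hyB : y ∈ B
      · refine ⟨B, ⟨mem_insert_self B π, hyB⟩, fun C ⟨hC, hyC⟩ => ?_⟩
        exact (mem_insert.1 hC).resolve_right fun hCπ => notMem_of_mem C hCπ y hyC hyB
      · obtain ⟨C, ⟨hC, hyC⟩, huniq⟩ := h.2 y (mem_sdiff.2 ⟨hyU, hyB⟩)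
        refine ⟨C, ⟨mem_insert_of_mem hC, hyC⟩, fun D ⟨hD, hyD⟩ => huniq D ⟨?_, hyD⟩⟩
        exact (mem_insert.1 hD).resolve_left fun hDB => hyB (hDB ▸ hyD)

/-- `π` matches the free points `F` together with the open points `V`, every open point being
matched with a free one. These are the ways to finish a pairing whose points outside `F` have been
scanned already, when `V` is the set of scanned points still waiting for a partner. -/
structure IsCompletion (F V : Finset α) (π : Finset (Finset α)) : Prop where
  isMatchingOn : IsMatchingOn (F ∪ V) π
  not_subset : ∀ B ∈ π, ¬ B ⊆ V

theorem IsCompletion.exists_pair_mem (h : IsCompletion F V π) (hx : x ∈ V) :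
    ∃ y ∈ F, {y, x} ∈ π := by
  obtain ⟨y, hy, hyx⟩ := h.isMatchingOn.exists_pair_mem (mem_union_right F hx)
  have hyV : y ∉ V := fun hyV => h.not_subset _ hyx (by simp [insert_subset_iff, hyV, hx])
  exact ⟨y, (mem_union.1 hy).resolve_right hyV, hyx⟩

theorem IsCompletion.pair_notMem (h : IsCompletion F V π) (haF : a ∉ F) (haV : a ∉ V) :
    {a, x} ∉ π := fun hax =>
  (mem_union.1 ((h.isMatchingOn.1 _ hax).2 (mem_insert_self a _))).elim haF haV

theorem isCompletion_insert_right_iff :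
    IsCompletion F (insert a V) π ↔ IsCompletion (insert a F) V π ∧ ∀ x ∈ V, {a, x} ∉ π := by
  have hunion : F ∪ insert a V = insert a F ∪ V := by simp
  constructor
  · intro h
    refine ⟨⟨hunion ▸ h.isMatchingOn, fun B hB hBV => ?_⟩, fun x hx hax => ?_⟩
    · exact h.not_subset B hB (hBV.trans (subset_insert a V))
    · exact h.not_subset _ hax (by simp [insert_subset_iff, hx])
  · rintro ⟨h, hpair⟩
    refine ⟨hunion ▸ h.isMatchingOn, fun B hB hBV => ?_⟩
    have haB : a ∈ B := by
      by_contra haB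
      exact h.not_subset B hB ((subset_insert_iff_of_notMem haB).1 hBV)
    obtain ⟨x, hx⟩ := card_eq_one.1
      ((card_erase_of_mem haB).trans (by rw [(h.isMatchingOn.1 B hB).1]))
    have hxV : x ∈ V := by simpa [hx] using subset_insert_iff.1 hBV
    exact hpair x hxV (by rwa [← hx, insert_erase haB])

theorem isCompletion_insert_pair_iff (haF : a ∉ F) (haV : a ∉ V) (hFV : Disjoint F V)
    (hx : x ∈ V) (hax : {a, x} ∉ π) :
    IsCompletion (insert a F) V (insert {a, x} π) ↔ IsCompletion F (V.erase x) π := by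
  have hne : a ≠ x := fun h => haV (h ▸ hx)
  have hsub : {a, x} ⊆ insert a F ∪ V := by simp [insert_subset_iff, hx]
  have hsdiff : (insert a F ∪ V) \ {a, x} = F ∪ V.erase x := by
    have hxF : x ∉ F := disjoint_right.1 hFV hx
    ext y
    simp only [mem_sdiff, mem_union, mem_insert, mem_singleton, mem_erase]
    grind
  have hmatch := isMatchingOn_insert_iff (card_pair hne) hsub hax
  rw [hsdiff] at hmatch
  constructor
  · intro h
    refine ⟨hmatch.1 h.isMatchingOn, fun B hB hBV => ?_⟩
    exact h.not_subset B (mem_insert_of_mem hB) (hBV.trans (erase_subset x V))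
  · intro h
    refine ⟨hmatch.2 h.isMatchingOn, forall_mem_insert .. |>.2 ⟨?_, fun B hB hBV => ?_⟩⟩
    · exact fun hsubV => haV (hsubV (mem_insert_self a _))
    · refine h.not_subset B hB fun y hy => ?_
      have hyU := (h.isMatchingOn.1 B hB).2 hy
      exact (mem_union.1 hyU).resolve_left fun hyF => disjoint_left.1 hFV hyF (hBV hy)

theorem isCompletion_empty_left_iff : IsCompletion ∅ V π ↔ V = ∅ ∧ π = ∅ := by
  constructor
  · intro h
    have hπ : π = ∅ := eq_empty_of_forall_notMem fun B hB =>
      h.not_subset B hB (by simpa using (h.isMatchingOn.1 B hB).2)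
    refine ⟨eq_empty_of_forall_notMem fun x hx => ?_, hπ⟩
    obtain ⟨y, hy, -⟩ := h.exists_pair_mem hx
    exact notMem_empty y hy
  · rintro ⟨rfl, rfl⟩
    exact ⟨⟨by simp, by simp⟩, by simp⟩

theorem isCompletion_empty_right_iff : IsCompletion F ∅ π ↔ IsMatchingOn F π := by
  refine ⟨fun h => union_empty F ▸ h.isMatchingOn, fun h => ⟨(union_empty F).symm ▸ h, ?_⟩⟩
  intro B hB hB0
  have hcard := (h.1 B hB).1
  simp [subset_empty.1 hB0] at hcard

end Matching

section Crossing

variable {F V : Finset ℕ} {π : Finset (Finset ℕ)} {a x : ℕ}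

theorem pair_eq_pair_iff_of_lt {α : Type*} [LinearOrder α] {a b c d : α} (hab : a < b)
    (hcd : c < d) : ({a, b} : Finset α) = {c, d} ↔ a = c ∧ b = d := by
  rw [← coe_inj, coe_pair, coe_pair, Set.pair_eq_pair_iff, or_iff_left]
  rintro ⟨rfl, rfl⟩
  exact hab.not_gt hcd

theorem crossAsym_pair_iff {a b c d : ℕ} (hab : a < b) (hcd : c < d) :
    CrossAsym {a, b} {c, d} ↔ a < c ∧ c < b ∧ b < d := by
  constructor
  · rintro ⟨a', b', c', d', hac, hcb, hbd, hB, hC⟩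
    obtain ⟨rfl, rfl⟩ := (pair_eq_pair_iff_of_lt hab (hac.trans hcb)).1 hB
    obtain ⟨rfl, rfl⟩ := (pair_eq_pair_iff_of_lt hcd (hcb.trans hbd)).1 hC
    exact ⟨hac, hcb, hbd⟩
  · rintro ⟨hac, hcb, hbd⟩
    exact ⟨a, b, c, d, hac, hcb, hbd, rfl, rfl⟩

theorem not_crossAsym_self (B : Finset ℕ) : ¬ CrossAsym B B := by
  rintro ⟨a, b, c, d, hac, hcb, hbd, rfl, hC⟩
  exact hac.ne ((pair_eq_pair_iff_of_lt (hac.trans hcb) (hcb.trans hbd)).1 hC).1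

theorem crNum_eq_sum (π : Finset (Finset ℕ)) :
    crNum π = ∑ B ∈ π, ∑ C ∈ π, if CrossAsym B C then 1 else 0 := by
  rw [← sum_product', ← card_filter, ← Set.ncard_coe_finset, crNum]
  congr 1
  ext p
  simp [and_assoc]

theorem crNum_insert {B : Finset ℕ} (hB : B ∉ π) :
    crNum (insert B π) = #{C ∈ π | CrossAsym B C} + #{C ∈ π | CrossAsym C B} + crNum π := by
  simp only [crNum_eq_sum, sum_insert hB, not_crossAsym_self, if_false, sum_add_distrib,
    card_filter]
  ring

theorem IsCompletion.card_filter_crossAsym (h : IsCompletion F V π) (hF : ∀ y ∈ F, y < a)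
    (hV : ∀ y ∈ V, a < y) (hax : a < x) :
    #{C ∈ π | CrossAsym C {a, x}} = #{y ∈ V | y < x} := by
  choose! g hgF hgπ using fun y => h.exists_pair_mem (x := y)
  refine (card_bij (fun y _ => {g y, y}) ?_ ?_ ?_).symm
  · intro y hy
    obtain ⟨hyV, hyx⟩ := mem_filter.1 hy
    have hga := hF _ (hgF y hyV)
    have hay := hV y hyV
    rw [mem_filter, crossAsym_pair_iff (hga.trans hay) hax]
    exact ⟨hgπ y hyV, hga, hay, hyx⟩
  · intro y hy z hz hyz
    have lt_of_mem {y : ℕ} (hy : y ∈ V) : g y < y := (hF _ (hgF y hy)).trans (hV y hy)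
    exact ((pair_eq_pair_iff_of_lt (lt_of_mem (mem_filter.1 hy).1)
      (lt_of_mem (mem_filter.1 hz).1)).1 hyz).2
  · intro C hC
    obtain ⟨hCπ, b, y, c, d, hbc, hcy, hyd, rfl, hcd⟩ := mem_filter.1 hC
    obtain ⟨rfl, rfl⟩ := (pair_eq_pair_iff_of_lt hax (hcy.trans hyd)).1 hcd
    have hyV : y ∈ V := by
      have hyU := (h.isMatchingOn.1 _ hCπ).2 (by simp : y ∈ {b, y})
      exact (mem_union.1 hyU).resolve_left fun hyF => (hF y hyF).not_gt hcy
    refine ⟨y, mem_filter.2 ⟨hyV, hyd⟩, ?_⟩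
    exact h.isMatchingOn.eq_of_mem_of_mem (x := y) (hgπ y hyV) hCπ (by simp) (by simp)

theorem IsCompletion.not_crossAsym (h : IsCompletion F V π) (hF : ∀ y ∈ F, y < a)
    (hax : a < x) {C : Finset ℕ} (hC : C ∈ π) : ¬ CrossAsym {a, x} C := by
  rintro ⟨a', x', c, d, hac, hcx, hxd, hB, rfl⟩
  obtain ⟨rfl, rfl⟩ := (pair_eq_pair_iff_of_lt hax (hac.trans hcx)).1 hB
  refine h.not_subset _ hC fun y hy => ?_
  have hay : a < y := by
    rcases mem_insert.1 hy with rfl | hy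
    · exact hac
    · exact mem_singleton.1 hy ▸ hax.trans hxd
  exact (mem_union.1 ((h.isMatchingOn.1 _ hC).2 hy)).resolve_left
    fun hyF => (hF y hyF).not_gt hay

theorem IsCompletion.crNum_insert_pair (h : IsCompletion F V π) (hF : ∀ y ∈ F, y < a)
    (hV : ∀ y ∈ V, a < y) (hax : a < x) :
    crNum (insert {a, x} π) = #{y ∈ V | y < x} + crNum π := by
  have haxπ : {a, x} ∉ π := h.pair_notMem (fun ha => (hF a ha).false) fun ha => (hV a ha).false
  rw [crNum_insert haxπ, h.card_filter_crossAsym hF hV hax,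
    filter_false_of_mem fun C hC => h.not_crossAsym hF hax hC, card_empty, zero_add]

end Crossing

section Counting

variable {p : Finset ℕ → Prop} {F V : Finset ℕ} {π : Finset (Finset ℕ)} {a x k : ℕ}

/-- The completions of the open points `V` by the free points `F` that have `k` crossings and all
of whose blocks satisfy `p`. -/
noncomputable def completions (p : Finset ℕ → Prop) (F V : Finset ℕ) (k : ℕ) :
    Finset (Finset (Finset ℕ)) :=
  {π ∈ (F ∪ V).powerset.powerset | IsCompletion F V π ∧ (∀ B ∈ π, p B) ∧ crNum π = k}

theorem mem_completions :
    π ∈ completions p F V k ↔ IsCompletion F V π ∧ (∀ B ∈ π, p B) ∧ crNum π = k := by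
  simp only [completions, mem_filter, mem_powerset, and_iff_right_iff_imp]
  exact fun h B hB => mem_powerset.2 (h.1.isMatchingOn.1 B hB).2

theorem completions_empty_left :
    completions p ∅ V k = if V = ∅ ∧ k = 0 then {∅} else ∅ := by
  have crNum_empty : crNum ∅ = 0 := by simp [crNum]
  ext π
  rw [mem_completions, isCompletion_empty_left_iff]
  split_ifs with h <;> aesop

theorem filter_completions_forall_pair_notMem :
    {π ∈ completions p (insert a F) V k | ∀ x ∈ V, {a, x} ∉ π} =
      completions p F (insert a V) k := by
  ext π
  simp only [mem_filter, mem_completions, isCompletion_insert_right_iff]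
  tauto

theorem card_filter_completions_pair_mem (hF : ∀ y ∈ F, y < a) (hV : ∀ y ∈ V, a < y)
    (hx : x ∈ V) :
    #{π ∈ completions p (insert a F) V k | {a, x} ∈ π} =
      if #{y ∈ V | y < x} ≤ k ∧ p {a, x} then
        #(completions p F (V.erase x) (k - #{y ∈ V | y < x})) else 0 := by
  have haF : a ∉ F := fun h => (hF a h).false
  have haV : a ∉ V := fun h => (hV a h).false
  have hFV : Disjoint F V := disjoint_left.2 fun y hyF hyV => (hF y hyF).not_gt (hV y hyV)
  have mem_insert_iff {π : Finset (Finset ℕ)} (haxπ : {a, x} ∉ π) :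
      insert {a, x} π ∈ completions p (insert a F) V k ↔
        IsCompletion F (V.erase x) π ∧ (p {a, x} ∧ ∀ B ∈ π, p B) ∧
          #{y ∈ V | y < x} + crNum π = k := by
    rw [mem_completions, isCompletion_insert_pair_iff haF haV hFV hx haxπ, forall_mem_insert]
    refine and_congr_right fun h => ?_
    have hV' : ∀ y ∈ V.erase x, a < y := fun y hy => hV y (mem_of_mem_erase hy)
    rw [h.crNum_insert_pair hF hV' (hV x hx), filter_erase, erase_eq_of_notMem (by simp)]
  split_ifs with hcond
  · have pair_notMem {π : Finset (Finset ℕ)}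
        (hπ : π ∈ completions p F (V.erase x) (k - #{y ∈ V | y < x})) : {a, x} ∉ π :=
      (mem_completions.1 hπ).1.pair_notMem haF fun ha => haV (mem_of_mem_erase ha)
    refine card_nbij' (fun π => π.erase {a, x}) (insert {a, x}) ?_ ?_ ?_ ?_
    · intro π hπ
      obtain ⟨hπ, haxπ⟩ := mem_filter.1 hπ
      rw [← insert_erase haxπ, mem_insert_iff (notMem_erase _ π)] at hπ
      exact mem_completions.2 ⟨hπ.1, hπ.2.1.2, by lia⟩
    · intro π hπ
      have hπ' := mem_completions.1 hπ
      refine mem_filter.2 ⟨(mem_insert_iff (pair_notMem hπ)).2 ?_, mem_insert_self _ π⟩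
      exact ⟨hπ'.1, ⟨hcond.2, hπ'.2.1⟩, by lia⟩
    · exact fun π hπ => insert_erase (mem_filter.1 hπ).2
    · exact fun π hπ => erase_insert (pair_notMem hπ)
  · refine card_eq_zero.2 (filter_false_of_mem fun π hπ haxπ => hcond ?_)
    rw [← insert_erase haxπ, mem_insert_iff (notMem_erase _ π)] at hπ
    exact ⟨by lia, hπ.2.1.1⟩

theorem card_completions_insert (hF : ∀ y ∈ F, y < a) (hV : ∀ y ∈ V, a < y) :
    #(completions p (insert a F) V k) = #(completions p F (insert a V) k) +
      ∑ x ∈ V, if #{y ∈ V | y < x} ≤ k ∧ p {a, x} then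
        #(completions p F (V.erase x) (k - #{y ∈ V | y < x})) else 0 := by
  have hdisj : (V : Set ℕ).PairwiseDisjoint
      fun x => {π ∈ completions p (insert a F) V k | {a, x} ∈ π} := by
    intro x hx y hy hxy
    refine disjoint_left.2 fun π hπx hπy => hxy ?_
    obtain ⟨hπ, hax⟩ := mem_filter.1 hπx
    have hpair : ({a, x} : Finset ℕ) = {a, y} := (mem_completions.1 hπ).1.isMatchingOn
      |>.eq_of_mem_of_mem hax (mem_filter.1 hπy).2 (mem_insert_self a _) (mem_insert_self a _)
    exact ((pair_eq_pair_iff_of_lt (hV x hx) (hV y hy)).1 hpair).2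
  have hunion : {π ∈ completions p (insert a F) V k | ¬ ∀ x ∈ V, {a, x} ∉ π} =
      V.biUnion fun x => {π ∈ completions p (insert a F) V k | {a, x} ∈ π} := by
    ext π
    simp only [mem_filter, mem_biUnion]
    grind
  rw [← card_filter_add_card_filter_not fun π => ∀ x ∈ V, {a, x} ∉ π,
    filter_completions_forall_pair_notMem, hunion, card_biUnion hdisj]
  exact congrArg _ (sum_congr rfl fun x hx => card_filter_completions_pair_mem hF hV hx)

end Counting

section Scan

variable {p : Finset ℕ → Prop} {m k : ℕ} {L : List ℕ}

/-- The number of ways to complete a pairing with `k` further crossings and blocks satisfying `p`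
when the free points are `1, …, m` and the list of open points is `L`. Scanning the free points
downwards, the point `m + 1` either becomes open or is matched with the `i`-th open point, which
creates a crossing with each of the `i` blocks through the earlier entries of `L`. -/
noncomputable def scanCount (p : Finset ℕ → Prop) : ℕ → List ℕ → ℕ → ℕ
  | 0, L, k => if L = [] ∧ k = 0 then 1 else 0
  | m + 1, L, k => scanCount p m ((m + 1) :: L) k +
      ∑ i ∈ range (k + 1), if i < L.length ∧ p {m + 1, L.getD i 0} then
        scanCount p m (L.eraseIdx i) (k - i) else 0

theorem card_filter_lt_getElem {α : Type*} [LinearOrder α] {L : List α} (hL : L.SortedLT) {i : ℕ}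
    (hi : i < L.length) : #{y ∈ L.toFinset | y < L[i]} = i := by
  have hfilter : {y ∈ L.toFinset | y < L[i]} = (L.take i).toFinset := by
    ext y
    simp only [mem_filter, List.mem_toFinset, List.mem_take_iff_getElem]
    constructor
    · rintro ⟨hy, hlt⟩
      obtain ⟨j, hj, rfl⟩ := List.mem_iff_getElem.1 hy
      exact ⟨j, lt_min (hL.getElem_lt_getElem_iff.1 hlt) hj, rfl⟩
    · rintro ⟨j, hj, rfl⟩
      have hji := (lt_min_iff.1 hj).1
      exact ⟨List.getElem_mem _, hL.getElem_lt_getElem_iff.2 hji⟩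
  rw [hfilter, List.toFinset_card_of_nodup (hL.nodup.sublist (L.take_sublist i)),
    List.length_take_of_le hi.le]

theorem sum_toFinset_eq_sum_range {α M : Type*} [DecidableEq α] [AddCommMonoid M] {L : List α}
    (hL : L.Nodup) (d : α) (f : α → M) :
    ∑ x ∈ L.toFinset, f x = ∑ i ∈ range L.length, f (L.getD i d) := by
  rw [List.sum_toFinset f hL, sum_range, ← List.sum_ofFn]
  congr 1
  apply List.ext_getElem <;> simp

theorem toFinset_erase_getElem {α : Type*} [DecidableEq α] {L : List α} (hL : L.Nodup) {i : ℕ}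
    (hi : i < L.length) : L.toFinset.erase L[i] = (L.eraseIdx i).toFinset := by
  ext y
  rw [mem_erase, List.mem_toFinset, List.mem_toFinset, ← hL.erase_getElem i hi, hL.mem_erase_iff]

theorem card_completions_eq_scanCount (hL : (m :: L).Pairwise (· < ·)) :
    #(completions p (Icc 1 m) L.toFinset k) = scanCount p m L k := by
  induction m generalizing L k with
  | zero => simp [completions_empty_left, scanCount, apply_ite card]
  | succ m ih =>
    obtain ⟨hm, hsorted⟩ := List.pairwise_cons.1 hL
    have hF : ∀ y ∈ Icc 1 m, y < m + 1 := fun y hy => Nat.lt_succ_of_le (mem_Icc.1 hy).2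
    have hV : ∀ y ∈ L.toFinset, m + 1 < y := fun y hy => hm y (List.mem_toFinset.1 hy)
    have hskip : (m :: L).Pairwise (· < ·) :=
      hsorted.cons fun y hy => (hm y hy).trans' m.lt_succ_self
    have hpush : (m :: (m + 1) :: L).Pairwise (· < ·) := by
      refine hL.cons fun y hy => ?_
      rcases List.mem_cons.1 hy with rfl | hy
      exacts [m.lt_succ_self, (hm y hy).trans' m.lt_succ_self]
    have hmatch : ∀ i ∈ range L.length,
        (if #{y ∈ L.toFinset | y < L.getD i 0} ≤ k ∧ p {m + 1, L.getD i 0} then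
          #(completions p (Icc 1 m) (L.toFinset.erase (L.getD i 0))
            (k - #{y ∈ L.toFinset | y < L.getD i 0})) else 0) =
        if i ≤ k ∧ p {m + 1, L.getD i 0} then scanCount p m (L.eraseIdx i) (k - i) else 0 := by
      intro i hi
      have hi : i < L.length := mem_range.1 hi
      rw [List.getD_eq_getElem L 0 hi, card_filter_lt_getElem hsorted.sortedLT hi,
        toFinset_erase_getElem hsorted.nodup hi,
        ih (hskip.sublist ((L.eraseIdx_sublist i).cons_cons m))]
    rw [← insert_Icc_right_eq_Icc_add_one (by lia), card_completions_insert hF hV, scanCount,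
      ← List.toFinset_cons, ih hpush, sum_toFinset_eq_sum_range hsorted.nodup 0,
      sum_congr rfl hmatch, ← sum_filter, ← sum_filter]
    congr 2
    ext i
    simp only [mem_filter, mem_range]
    lia

end Scan

section Parity

/-- The blocks allowed in a parity-reversing pairing. -/
def IsOddEven (B : Finset ℕ) : Prop := ∃ a b : ℕ, B = {a, b} ∧ Odd a ∧ Even b

theorem isOddEven_pair_iff {a b : ℕ} : IsOddEven {a, b} ↔ a % 2 ≠ b % 2 := by
  constructor
  · rintro ⟨c, d, hpair, hc, hd⟩
    rw [Nat.odd_iff] at hc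
    rw [Nat.even_iff] at hd
    rw [← coe_inj, coe_pair, coe_pair, Set.pair_eq_pair_iff] at hpair
    lia
  · intro hab
    rcases Nat.even_or_odd a with ha | ha
    · refine ⟨b, a, pair_comm a b, ?_, ha⟩
      rw [Nat.odd_iff]
      rw [Nat.even_iff] at ha
      lia
    · refine ⟨a, b, rfl, ha, ?_⟩
      rw [Nat.even_iff]
      rw [Nat.odd_iff] at ha
      lia

theorem rCount_eq_scanCount (n k : ℕ) : rCount n k = scanCount IsOddEven (2 * n) [] k := by
  rw [← card_completions_eq_scanCount (List.pairwise_singleton _ _), ← Set.ncard_coe_finset,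
    rCount]
  congr 1
  ext π
  rw [List.toFinset_nil, mem_coe, mem_completions, isCompletion_empty_right_iff]
  rfl

end Parity

section Walk

/-- The number of walks of length `m` on `ℤ` with steps `±1` from `0` to `j`; the points `1` and
`-1` adjacent to `0` are reached equally often. -/
def walkCount : ℕ → ℕ → ℕ
  | 0, j => if j = 0 then 1 else 0
  | m + 1, 0 => 2 * walkCount m 1
  | m + 1, j + 1 => walkCount m (j + 2) + walkCount m j

theorem walkCount_eq_zero_of_lt {m j : ℕ} (h : m < j) : walkCount m j = 0 := by
  induction m generalizing j with
  | zero => simp [walkCount, h.ne']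
  | succ m ih =>
    obtain ⟨j, rfl⟩ : ∃ i, j = i + 1 := ⟨j - 1, by lia⟩
    rw [walkCount, ih (by lia), ih (by lia)]

theorem walkCount_add_two_mul (j i : ℕ) : walkCount (j + 2 * i) j = (j + 2 * i).choose i := by
  generalize hm : j + 2 * i = m
  induction m generalizing j i with
  | zero =>
    obtain ⟨rfl, rfl⟩ : j = 0 ∧ i = 0 := by lia
    rfl
  | succ m ih =>
    rcases j with _ | j
    · obtain ⟨i, rfl⟩ : ∃ l, i = l + 1 := ⟨i - 1, by lia⟩
      have hsymm : m.choose i = m.choose (i + 1) := Nat.choose_symm_of_eq_add (by lia)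
      rw [walkCount, ih 1 i (by lia), Nat.choose_succ_succ, ← hsymm, two_mul]
    · rcases i with _ | i
      · rw [walkCount, walkCount_eq_zero_of_lt (by lia), ih j 0 (by lia), zero_add,
          Nat.choose_zero_right, Nat.choose_zero_right]
      · rw [walkCount, ih (j + 2) i (by lia), ih j (i + 1) (by lia), Nat.choose_succ_succ]

end Walk

section Alternating

variable {p : Finset ℕ → Prop} {m x y z : ℕ} {A L : List ℕ}

/-- Consecutive entries have opposite parities. For a list `m :: L` this says that the open points
`L` alternate in parity and that the next free point `m` may be matched with the first of them. -/
def Alternating (L : List ℕ) : Prop := L.IsChain fun a b => a % 2 ≠ b % 2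

theorem alternating_cons_cons :
    Alternating (x :: y :: L) ↔ x % 2 ≠ y % 2 ∧ Alternating (y :: L) := List.isChain_cons_cons

theorem alternating_cons_congr (h : x % 2 = y % 2) :
    Alternating (x :: L) ↔ Alternating (y :: L) := by
  cases L <;> simp [Alternating, h]

theorem Alternating.push (h : Alternating ((m + 1) :: L)) : Alternating (m :: (m + 1) :: L) :=
  alternating_cons_cons.2 ⟨by lia, h⟩

theorem Alternating.isOddEven (h : Alternating (x :: y :: L)) : IsOddEven {x, y} :=
  isOddEven_pair_iff.2 (alternating_cons_cons.1 h).1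

theorem Alternating.not_isOddEven (h : Alternating (x :: y :: z :: L)) : ¬ IsOddEven {x, z} := by
  simp only [alternating_cons_cons] at h
  rw [isOddEven_pair_iff]
  lia

theorem alternating_cons_iff_of_isOddEven (h : IsOddEven {m + 1, x}) :
    Alternating (x :: L) ↔ Alternating (m :: L) :=
  alternating_cons_congr (by rw [isOddEven_pair_iff] at h; lia)

theorem Alternating.match_head (h : Alternating ((m + 1) :: x :: L)) : Alternating (m :: L) :=
  (alternating_cons_iff_of_isOddEven h.isOddEven).1 (alternating_cons_cons.1 h).2

theorem Alternating.match_third (h : Alternating ((m + 1) :: x :: y :: z :: L)) :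
    Alternating (m :: y :: x :: L) := by
  simp only [alternating_cons_cons] at h
  have htail : Alternating (x :: L) := (alternating_cons_congr (by lia)).1 h.2.2.2
  exact alternating_cons_cons.2 ⟨by lia, alternating_cons_cons.2 ⟨by lia, htail⟩⟩

theorem scanCount_succ_nil {k : ℕ} :
    scanCount p (m + 1) [] k = scanCount p m [m + 1] k := by
  simp [scanCount]

theorem scanCount_succ_zero :
    scanCount p (m + 1) (x :: L) 0 = scanCount p m ((m + 1) :: x :: L) 0 +
      if p {m + 1, x} then scanCount p m L 0 else 0 := by
  simp [scanCount]

theorem scanCount_zero_of_not_alternating (h : ¬ Alternating (m :: L)) :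
    scanCount IsOddEven m L 0 = 0 := by
  induction m generalizing L with
  | zero =>
    have hL : L ≠ [] := fun hL => h (hL ▸ List.isChain_singleton 0)
    simp [scanCount, hL]
  | succ m ih =>
    rcases L with _ | ⟨x, L⟩
    · exact absurd (List.isChain_singleton (m + 1)) h
    · rw [scanCount_succ_zero, ih fun h' => h (alternating_cons_cons.1 h').2, zero_add,
        ite_eq_right_iff]
      refine fun hx => ih fun h' => h (alternating_cons_cons.2 ⟨isOddEven_pair_iff.1 hx, ?_⟩)
      exact (alternating_cons_iff_of_isOddEven hx).2 h'

theorem scanCount_zero_add_walkCount (h : Alternating (m :: L)) :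
    scanCount IsOddEven m L 0 + walkCount m (L.length + 2) = walkCount m L.length := by
  induction m generalizing L with
  | zero => cases L <;> simp [scanCount, walkCount]
  | succ m ih =>
    have hpush := ih h.push
    rcases L with _ | ⟨x, L⟩
    · simp only [List.length_cons, List.length_nil, scanCount_succ_nil, walkCount] at hpush ⊢
      lia
    · have hmatch := ih h.match_head
      rw [scanCount_succ_zero, if_pos h.isOddEven]
      simp only [List.length_cons, walkCount] at hpush ⊢
      lia

-- A crossing spent on anything but undoing the swap leaves a list that is not alternating.
theorem scanCount_one_swap (h : Alternating (m :: (A ++ x :: y :: L))) :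
    scanCount IsOddEven m (A ++ y :: x :: L) 1 = scanCount IsOddEven m (A ++ x :: y :: L) 0 := by
  induction m generalizing A with
  | zero => cases A <;> simp [scanCount]
  | succ m ih =>
    have hpush := ih (A := (m + 1) :: A) h.push
    rcases A with _ | ⟨z, A⟩
    · have hx : IsOddEven {m + 1, x} := h.isOddEven
      have hy : ¬ IsOddEven {m + 1, y} := h.not_isOddEven
      simp only [List.nil_append, List.cons_append] at hpush ⊢
      simp [scanCount, sum_range_succ, hpush, hx, hy]
    · have hz : IsOddEven {m + 1, z} := h.isOddEven
      have hmatch := ih h.match_head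
      have hblocked (L' : List ℕ) : scanCount IsOddEven m (z :: L') 0 = 0 := by
        refine scanCount_zero_of_not_alternating fun h' => (alternating_cons_cons.1 h').1 ?_
        rw [isOddEven_pair_iff] at hz
        lia
      simp only [List.cons_append] at hpush ⊢
      simp [scanCount, sum_range_succ, hpush, hmatch, hz, hblocked]

/-- The number of ways for `m` free points to complete `h` alternating open points with three more
crossings. The term `h * walkCount m (h + 2)` comes from the noncrossing completions in the
recursion `scanCount_succ_three`. -/
def threeCrossingCount (m : ℕ) : ℕ → ℕ
  | 0 => walkCount m 6
  | 1 => walkCount m 7 + walkCount m 5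
  | h + 2 =>
    walkCount m (h + 8) + walkCount m (h + 6) + walkCount m (h + 4) + h * walkCount m (h + 2)

theorem threeCrossingCount_succ_add (m h : ℕ) :
    threeCrossingCount (m + 1) (h + 3) + walkCount m (h + 4) =
      threeCrossingCount m (h + 4) + threeCrossingCount m (h + 2) + walkCount m (h + 2) := by
  simp only [threeCrossingCount, walkCount]
  ring

theorem scanCount_succ_three_of_length_le_one (h : Alternating ((m + 1) :: x :: L))
    (hL : L.length ≤ 1) :
    scanCount IsOddEven (m + 1) (x :: L) 3 =
      scanCount IsOddEven m ((m + 1) :: x :: L) 3 + scanCount IsOddEven m L 3 := by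
  rcases L with _ | ⟨y, _ | ⟨z, L⟩⟩
  · simp [scanCount, sum_range_succ, h.isOddEven]
  · simp [scanCount, sum_range_succ, h.isOddEven, h.not_isOddEven]
  · simp at hL

theorem scanCount_succ_three (h : Alternating ((m + 1) :: x :: y :: z :: L)) :
    scanCount IsOddEven (m + 1) (x :: y :: z :: L) 3 =
      scanCount IsOddEven m ((m + 1) :: x :: y :: z :: L) 3 +
        scanCount IsOddEven m (y :: z :: L) 3 + scanCount IsOddEven m (y :: x :: L) 0 := by
  have hz : IsOddEven {m + 1, z} := by
    simp only [alternating_cons_cons] at h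
    rw [isOddEven_pair_iff]
    lia
  have hfourth (hL : 0 < L.length) : ¬ IsOddEven {m + 1, L[0]} := by
    obtain ⟨w, L, rfl⟩ := List.exists_cons_of_length_pos hL
    simp only [alternating_cons_cons] at h
    rw [List.getElem_cons_zero, isOddEven_pair_iff]
    lia
  have hswap : scanCount IsOddEven m (x :: y :: L) 1 = scanCount IsOddEven m (y :: x :: L) 0 :=
    scanCount_one_swap (A := []) h.match_third
  simp +contextual [scanCount, sum_range_succ, h.isOddEven, h.not_isOddEven, hz, hfourth, hswap,
    add_assoc]

theorem scanCount_three (h : Alternating (m :: L)) :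
    scanCount IsOddEven m L 3 = threeCrossingCount m L.length := by
  induction m generalizing L with
  | zero => rcases L with _ | ⟨x, _ | ⟨y, L⟩⟩ <;> simp [scanCount, threeCrossingCount, walkCount]
  | succ m ih =>
    have hpush := ih h.push
    rcases L with _ | ⟨x, L⟩
    · rw [scanCount_succ_nil, hpush]
      rfl
    have hmatch := ih h.match_head
    rcases L with _ | ⟨y, _ | ⟨z, L⟩⟩
    · rw [scanCount_succ_three_of_length_le_one h (by simp), hpush, hmatch]
      simp only [threeCrossingCount, walkCount, List.length_cons, List.length_nil]
      ring
    · rw [scanCount_succ_three_of_length_le_one h (by simp), hpush, hmatch]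
      simp only [threeCrossingCount, walkCount, List.length_cons, List.length_nil]
      ring
    · have hthird := scanCount_zero_add_walkCount h.match_third
      have hrec := threeCrossingCount_succ_add m L.length
      rw [scanCount_succ_three h, hpush, hmatch]
      simp only [List.length_cons] at hthird hrec ⊢
      lia

end Alternating

/-- `r_{n,3} = C(2n, n−3)`, with the convention that the binomial coefficient is `0`
when `3 > n`. -/
theorem rCount_three (n : ℕ) (hn : 1 ≤ n) :
    rCount n 3 = if 3 ≤ n then (2 * n).choose (n - 3) else 0 := by
  rw [rCount_eq_scanCount, scanCount_three (List.isChain_singleton _), List.length_nil,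
    threeCrossingCount]
  split_ifs with h
  · obtain ⟨i, rfl⟩ := Nat.exists_eq_add_of_le h
    rw [Nat.add_sub_cancel_left, mul_add]
    exact walkCount_add_two_mul 6 i
  · exact walkCount_eq_zero_of_lt (by lia)
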